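/- Let x₀ > 0 and define xₙ = arcsinh(xₙ₋₁) = log(xₙ₋₁ + √(1 + xₙ₋₁²)) for n ≥ 1. Then n·xₙ² → 3 as n → ∞. -/

import Mathlib

open Filter

/-!
For a sequence `x` of nonzero numbers tending to `0` with `x (n + 1) = x n - a (x n)^(p + 1) + ⋯`,
the substitution `y = x⁻ᵖ` turns the recursion into one with nearly constant increments:
`y (n + 1) - y n → p a`. Averaging the increments gives `y n / n → p a`, that is,
`n (x n)^p → (p a)⁻¹`. For `arsinh` one has `p = 2` and `a = 1 / 6`.
-/

open scoped Topology

lemma tendsto_inv_smul_of_tendsto_sub {E : Type*} [NormedAddCommGroup E] [NormedSpace ℝ E]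
    {y : ℕ → E} {l : E} (h : Tendsto (fun n => y (n + 1) - y n) atTop (𝓝 l)) :
    Tendsto (fun n : ℕ => (n : ℝ)⁻¹ • y n) atTop (𝓝 l) := by
  have initial : Tendsto (fun n : ℕ => (n : ℝ)⁻¹ • y 0) atTop (𝓝 0) := by
    simpa using (tendsto_inv_atTop_nhds_zero_nat (𝕜 := ℝ)).smul_const (y 0)
  simpa only [Finset.sum_range_sub, ← smul_add, sub_add_cancel, add_zero] using
    h.cesaro_smul.add initial

lemma tendsto_zero_of_norm_map_lt {E : Type*} [NormedAddCommGroup E] [ProperSpace E] {f : E → E}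
    (hf : Continuous f) (hf0 : f 0 = 0) (hlt : ∀ z, z ≠ 0 → ‖f z‖ < ‖z‖) {x : ℕ → E}
    (hx : ∀ n, x (n + 1) = f (x n)) : Tendsto x atTop (𝓝 0) := by
  have hle (z : E) : ‖f z‖ ≤ ‖z‖ := by
    obtain rfl | hz := eq_or_ne z 0
    · rw [hf0]
    · exact (hlt z hz).le
  have anti : Antitone fun n => ‖x n‖ := antitone_nat_of_succ_le fun n => hx n ▸ hle (x n)
  obtain ⟨r, hr⟩ : ∃ r, Tendsto (fun n => ‖x n‖) atTop (𝓝 r) :=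
    ⟨_, tendsto_atTop_ciInf anti ⟨0, by rintro _ ⟨n, rfl⟩; exact norm_nonneg _⟩⟩
  obtain ⟨z, -, φ, hφ, hz⟩ := (isCompact_closedBall (0 : E) ‖x 0‖).tendsto_subseq
    fun n => mem_closedBall_zero_iff.2 (anti n.zero_le)
  have norm_z : ‖z‖ = r := tendsto_nhds_unique hz.norm (hr.comp hφ.tendsto_atTop)
  have norm_fz : ‖f z‖ = r := by
    refine tendsto_nhds_unique ((hf.tendsto z).comp hz).norm ?_
    simpa [Function.comp_def, hx] using
      ((tendsto_add_atTop_iff_nat 1).2 hr).comp hφ.tendsto_atTop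
  have z_eq_zero : z = 0 := by
    by_contra hz0
    exact (hlt z hz0).ne (norm_fz.trans norm_z.symm)
  rw [tendsto_zero_iff_norm_tendsto_zero]
  simpa [← norm_z, z_eq_zero] using hr

section PowerRecursion

variable {𝕜 : Type*} [RCLike 𝕜] {x : ℕ → 𝕜} {p : ℕ} {a : 𝕜}

lemma tendsto_succ_div_of_tendsto_sub_div_pow (hp : p ≠ 0) (hx : ∀ n, x n ≠ 0)
    (hx0 : Tendsto x atTop (𝓝 0))
    (ha : Tendsto (fun n => (x n - x (n + 1)) / x n ^ (p + 1)) atTop (𝓝 a)) :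
    Tendsto (fun n => x (n + 1) / x n) atTop (𝓝 1) := by
  have defect : Tendsto (fun n => (x n - x (n + 1)) / x n ^ (p + 1) * x n ^ p) atTop (𝓝 0) := by
    simpa [hp] using ha.mul (hx0.pow p)
  have ratio (n : ℕ) : 1 - (x n - x (n + 1)) / x n ^ (p + 1) * x n ^ p = x (n + 1) / x n := by
    have := hx n
    field_simp
    ring
  simpa only [ratio, sub_zero] using defect.const_sub 1

lemma tendsto_inv_pow_succ_sub_inv_pow (hp : p ≠ 0) (hx : ∀ n, x n ≠ 0)
    (hx0 : Tendsto x atTop (𝓝 0))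
    (ha : Tendsto (fun n => (x n - x (n + 1)) / x n ^ (p + 1)) atTop (𝓝 a)) :
    Tendsto (fun n => (x (n + 1) ^ p)⁻¹ - (x n ^ p)⁻¹) atTop (𝓝 (p * a)) := by
  have ratio := tendsto_succ_div_of_tendsto_sub_div_pow hp hx hx0 ha
  have geom_sum : Tendsto (fun n => ∑ i ∈ Finset.range p, (x (n + 1) / x n) ^ i) atTop
      (𝓝 (p : 𝕜)) := by
    simpa using tendsto_finsetSum (Finset.range p) fun i _ => ratio.pow i
  have quotient : Tendsto (fun n => (∑ i ∈ Finset.range p, (x (n + 1) / x n) ^ i) *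
      ((x n - x (n + 1)) / x n ^ (p + 1)) / (x (n + 1) / x n) ^ p) atTop (𝓝 (p * a)) := by
    simpa [Pi.div_def] using (geom_sum.mul ha).div (ratio.pow p) (by simp)
  refine quotient.congr fun n => ?_
  have hn := hx n
  have hn' := hx (n + 1)
  have factor : (x n - x (n + 1)) / x n ^ (p + 1) = (1 - x (n + 1) / x n) / x n ^ p := by
    field_simp
    ring
  -- With `u = x (n + 1) / x n`, both sides are `(1 - u ^ p) / (u ^ p * x n ^ p)`.
  rw [factor, ← mul_div_assoc, geom_sum_mul_neg, div_pow]
  field_simp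

theorem tendsto_natCast_mul_pow_of_tendsto_sub_div_pow (hp : p ≠ 0) (ha0 : a ≠ 0)
    (hx : ∀ n, x n ≠ 0) (hx0 : Tendsto x atTop (𝓝 0))
    (ha : Tendsto (fun n => (x n - x (n + 1)) / x n ^ (p + 1)) atTop (𝓝 a)) :
    Tendsto (fun n : ℕ => (n : 𝕜) * x n ^ p) atTop (𝓝 (p * a)⁻¹) := by
  have average : Tendsto (fun n : ℕ => (n : ℝ)⁻¹ • (x n ^ p)⁻¹) atTop (𝓝 (p * a)) :=
    tendsto_inv_smul_of_tendsto_sub (y := fun n => (x n ^ p)⁻¹)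
      (tendsto_inv_pow_succ_sub_inv_pow hp hx hx0 ha)
  refine (average.inv₀ (mul_ne_zero (Nat.cast_ne_zero.2 hp) ha0)).congr fun n => ?_
  simp [RCLike.real_smul_eq_coe_mul, mul_comm]

end PowerRecursion

lemma abs_arsinh_lt_abs {x : ℝ} (hx : x ≠ 0) : |Real.arsinh x| < |x| := by
  calc |Real.arsinh x| < Real.sinh |Real.arsinh x| :=
        Real.self_lt_sinh_iff.2 (abs_pos.2 (Real.arsinh_eq_zero_iff.not.2 hx))
    _ = |x| := by rw [← Real.abs_sinh, Real.sinh_arsinh]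

lemma one_sub_inv_sqrt_one_add_sq_div {x : ℝ} (hx : x ≠ 0) :
    (1 - (√(1 + x ^ 2))⁻¹) / (3 * x ^ 2) = (3 * (√(1 + x ^ 2) * (√(1 + x ^ 2) + 1)))⁻¹ := by
  have sq : √(1 + x ^ 2) ^ 2 = 1 + x ^ 2 := Real.sq_sqrt (by positivity)
  field_simp
  linear_combination sq

lemma tendsto_sub_arsinh_div_cube :
    Tendsto (fun x => (x - Real.arsinh x) / x ^ 3) (𝓝[≠] 0) (𝓝 (1 / 6)) := by
  have deriv_quotient : Tendsto (fun x : ℝ => (1 - (√(1 + x ^ 2))⁻¹) / (3 * x ^ 2)) (𝓝[≠] 0)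
      (𝓝 (1 / 6)) := by
    have cont : ContinuousAt (fun x : ℝ => (3 * (√(1 + x ^ 2) * (√(1 + x ^ 2) + 1)))⁻¹) 0 :=
      ContinuousAt.inv₀ (by fun_prop) (by norm_num)
    have limit : Tendsto (fun x : ℝ => (3 * (√(1 + x ^ 2) * (√(1 + x ^ 2) + 1)))⁻¹) (𝓝[≠] 0)
        (𝓝 (1 / 6)) := by
      convert cont.tendsto.mono_left nhdsWithin_le_nhds using 2
      norm_num
    refine limit.congr' ?_
    filter_upwards [self_mem_nhdsWithin] with x hx
    exact (one_sub_inv_sqrt_one_add_sq_div hx).symm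
  refine HasDerivAt.lhopital_zero_nhdsNE
    (.of_forall fun x => (hasDerivAt_id x).sub (Real.hasDerivAt_arsinh x))
    (.of_forall fun x => by simpa using hasDerivAt_pow 3 x) ?_ ?_ ?_ deriv_quotient
  · filter_upwards [self_mem_nhdsWithin] with x hx
    exact mul_ne_zero three_ne_zero (pow_ne_zero 2 hx)
  · have : ContinuousAt (fun x => x - Real.arsinh x) 0 := by fun_prop
    simpa using this.tendsto.mono_left nhdsWithin_le_nhds
  · have : ContinuousAt (fun x : ℝ => x ^ 3) 0 := by fun_prop
    simpa using this.tendsto.mono_left nhdsWithin_le_nhds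

theorem arcsinh_iterates_asymptotics_general (x : ℕ → ℝ) (hx0 : x 0 ≠ 0)
    (hrec : ∀ n, x (n + 1) = Real.arsinh (x n)) :
    Tendsto (fun n : ℕ => (n : ℝ) * x n ^ 2) atTop (𝓝 3) := by
  have ne_zero (n : ℕ) : x n ≠ 0 := by
    induction n with
    | zero => exact hx0
    | succ n ih => rwa [hrec, Ne, Real.arsinh_eq_zero_iff]
  have to_zero : Tendsto x atTop (𝓝 0) :=
    tendsto_zero_of_norm_map_lt Real.continuous_arsinh Real.arsinh_zero
      (fun _ => abs_arsinh_lt_abs) hrec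
  have defect : Tendsto (fun n => (x n - x (n + 1)) / x n ^ (2 + 1)) atTop (𝓝 (1 / 6)) := by
    simp only [hrec]
    exact tendsto_sub_arsinh_div_cube.comp
      (tendsto_nhdsWithin_iff.2 ⟨to_zero, .of_forall ne_zero⟩)
  convert tendsto_natCast_mul_pow_of_tendsto_sub_div_pow two_ne_zero (by norm_num) ne_zero to_zero
    defect using 2
  norm_num

/-- For the recursion `x (n+1) = arcsinh (x n) = log (x n + √(1 + (x n)²))` with
`x 0 > 0`, one has `n * (x n)² → 3`. -/
theorem arcsinh_iterates_asymptotics (x : ℕ → ℝ)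
    (hx0 : x 0 > 0)
    (hrec : ∀ n : ℕ, x (n + 1) = Real.log (x n + Real.sqrt (1 + x n ^ 2))) :
    Tendsto (fun n : ℕ => (n : ℝ) * x n ^ 2) atTop (nhds 3) :=
  arcsinh_iterates_asymptotics_general x hx0.ne' hrec
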